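/- arXiv:2105.07118 — 6 statements merged into one kernel-verified Lean document; each statement's English description precedes it below -/
import Mathlib

section
/- Let V be a finite-dimensional real normed vector space with complementary subspaces S and U (V = S ⊕ U), and let P_S, P_U denote the linear projections onto S along U and onto U along S. Let λ ∈ (0,1), n ≥ 1 a natural number, and γ ∈ (0,1). Let L : V → V be a linear map with L(S) ⊆ S, L(U) ⊆ U, ‖L s‖ ≤ λ^n ‖s‖ for all s ∈ S, and ‖L u‖ ≥ λ^{-n} ‖u‖ for all u ∈ U. Then there exists ε > 0 such that for every linear map L' : V → V satisfying ‖L' v − L v‖ ≤ ε‖v‖ for all v ∈ V, and for every nonzero v ∈ V with ‖P_S v‖ ≤ γ‖P_U v‖, one has ‖P_S (L' v)‖ < γ ‖P_U (L' v)‖ (i.e. L' maps the γ-unstable cone minus the origin into the interior of the γ-unstable cone). -/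
/-!
Write `a = λ ^ n` and `b = λ⁻¹ ^ n`. Since `L` respects the splitting, it commutes with both
projections, so on the cone `‖P_S (L v)‖ ≤ a γ ‖P_U v‖` and `γ ‖P_U (L v)‖ ≥ b γ ‖P_U v‖`. On the
cone also `‖v‖ ≤ (1 + γ) ‖P_U v‖`, so replacing `L` by `L'` changes both components by at most a
multiple of `ε ‖P_U v‖`, which the gap `γ (b - a) ‖P_U v‖` absorbs once `ε` is small.
-/

section Splitting

variable {R V : Type*} [Ring R] [AddCommGroup V] [Module R V] {S U : Submodule R V}

theorem eq_and_eq_of_add_eq_add_of_disjoint (hSU : Disjoint S U) {s s' u u' : V}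
    (hs : s ∈ S) (hs' : s' ∈ S) (hu : u ∈ U) (hu' : u' ∈ U) (h : s + u = s' + u') :
    s = s' ∧ u = u' := by
  have hdisj : Disjoint S.toAddSubgroup U.toAddSubgroup :=
    AddSubgroup.disjoint_def.mpr (Submodule.disjoint_def.mp hSU _)
  have hpair : ((⟨s, hs⟩, ⟨u, hu⟩) : S.toAddSubgroup × U.toAddSubgroup) = (⟨s', hs'⟩, ⟨u', hu'⟩) :=
    AddSubgroup.add_injective_of_disjoint hdisj h
  simpa only [Prod.mk.injEq, Subtype.mk.injEq] using hpair

theorem projections_map_eq_of_invariant (hSU : Disjoint S U) {PS PU L : V →ₗ[R] V}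
    (hPSmem : ∀ v, PS v ∈ S) (hPUmem : ∀ v, PU v ∈ U) (hsum : ∀ v, PS v + PU v = v)
    (hLS : ∀ s ∈ S, L s ∈ S) (hLU : ∀ u ∈ U, L u ∈ U) (v : V) :
    PS (L v) = L (PS v) ∧ PU (L v) = L (PU v) :=
  eq_and_eq_of_add_eq_add_of_disjoint hSU (hPSmem _) (hLS _ (hPSmem v)) (hPUmem _)
    (hLU _ (hPUmem v)) (by rw [hsum, ← map_add, hsum])

end Splitting

theorem norm_add_le_one_add_mul_of_norm_le_mul {E : Type*} [SeminormedAddGroup E] {s u : E}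
    {γ : ℝ} (h : ‖s‖ ≤ γ * ‖u‖) : ‖s + u‖ ≤ (1 + γ) * ‖u‖ := by
  linarith [norm_add_le s u]

theorem norm_pos_of_norm_le_mul_of_add_ne_zero {E : Type*} [NormedAddGroup E] {s u : E}
    {γ : ℝ} (h : ‖s‖ ≤ γ * ‖u‖) (hne : s + u ≠ 0) : 0 < ‖u‖ := by
  refine norm_pos_iff.mpr fun hu => hne ?_
  simpa [hu] using h

section Cone

variable {𝕜 V : Type*} [NontriviallyNormedField 𝕜] [NormedAddCommGroup V] [NormedSpace 𝕜 V]
  {PS PU : V →L[𝕜] V} {a b γ ε : ℝ}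

theorem norm_map_sub_map_le_of_mem_cone {W : Type*} [SeminormedAddCommGroup W] [NormedSpace 𝕜 W]
    (T : V →L[𝕜] W) (hsum : ∀ v, PS v + PU v = v) (hε : 0 ≤ ε) {v w w' : V}
    (hcone : ‖PS v‖ ≤ γ * ‖PU v‖) (hnear : ‖w' - w‖ ≤ ε * ‖v‖) :
    ‖T w' - T w‖ ≤ ‖T‖ * (ε * ((1 + γ) * ‖PU v‖)) := by
  have hv : ‖v‖ ≤ (1 + γ) * ‖PU v‖ := by
    simpa only [hsum] using norm_add_le_one_add_mul_of_norm_le_mul hcone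
  rw [← map_sub]
  exact T.le_opNorm_of_le (hnear.trans (by gcongr))

theorem norm_lt_mul_norm_of_near_dominated (hsum : ∀ v, PS v + PU v = v)
    (ha : 0 ≤ a) (hγ : 0 < γ) (hε : 0 ≤ ε)
    (hsmall : (‖PS‖ + γ * ‖PU‖) * (1 + γ) * ε < γ * (b - a)) {v w w' : V} (hv : v ≠ 0)
    (hcone : ‖PS v‖ ≤ γ * ‖PU v‖) (hPS : ‖PS w‖ ≤ a * ‖PS v‖) (hPU : b * ‖PU v‖ ≤ ‖PU w‖)
    (hnear : ‖w' - w‖ ≤ ε * ‖v‖) :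
    ‖PS w'‖ < γ * ‖PU w'‖ := by
  have hpos : 0 < ‖PU v‖ :=
    norm_pos_of_norm_le_mul_of_add_ne_zero hcone ((hsum v).symm ▸ hv)
  have herrS := norm_map_sub_map_le_of_mem_cone PS hsum hε hcone hnear
  have herrU := norm_map_sub_map_le_of_mem_cone PU hsum hε hcone hnear
  have hPSw' : ‖PS w'‖ ≤ a * (γ * ‖PU v‖) + ‖PS‖ * (ε * ((1 + γ) * ‖PU v‖)) :=
    calc ‖PS w'‖ ≤ ‖PS w‖ + ‖PS w' - PS w‖ := norm_le_norm_add_norm_sub' _ _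
      _ ≤ a * ‖PS v‖ + ‖PS‖ * (ε * ((1 + γ) * ‖PU v‖)) := add_le_add hPS herrS
      _ ≤ a * (γ * ‖PU v‖) + ‖PS‖ * (ε * ((1 + γ) * ‖PU v‖)) := by gcongr
  have hPUw' : b * ‖PU v‖ - ‖PU‖ * (ε * ((1 + γ) * ‖PU v‖)) ≤ ‖PU w'‖ := by
    linarith [norm_le_norm_add_norm_sub (PU w') (PU w)]
  calc ‖PS w'‖ ≤ a * (γ * ‖PU v‖) + ‖PS‖ * (ε * ((1 + γ) * ‖PU v‖)) := hPSw'
    _ < γ * (b * ‖PU v‖ - ‖PU‖ * (ε * ((1 + γ) * ‖PU v‖))) := by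
      linarith [mul_lt_mul_of_pos_right hsmall hpos]
    _ ≤ γ * ‖PU w'‖ := by gcongr

theorem stmt0_general {S U : Submodule 𝕜 V} (hSU : Disjoint S U)
    (hPSmem : ∀ v, PS v ∈ S) (hPUmem : ∀ v, PU v ∈ U) (hsum : ∀ v, PS v + PU v = v)
    (ha : 0 ≤ a) (hab : a < b) (hγ : 0 < γ) {L : V →ₗ[𝕜] V}
    (hLS : ∀ s ∈ S, L s ∈ S) (hLU : ∀ u ∈ U, L u ∈ U)
    (hLs : ∀ s ∈ S, ‖L s‖ ≤ a * ‖s‖) (hLu : ∀ u ∈ U, b * ‖u‖ ≤ ‖L u‖) :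
    ∃ ε > (0 : ℝ), ∀ L' : V →ₗ[𝕜] V, (∀ v, ‖L' v - L v‖ ≤ ε * ‖v‖) →
      ∀ v : V, v ≠ 0 → ‖PS v‖ ≤ γ * ‖PU v‖ → ‖PS (L' v)‖ < γ * ‖PU (L' v)‖ := by
  obtain ⟨ε, hε, hsmall⟩ :=
    exists_pos_mul_lt (mul_pos hγ (sub_pos.mpr hab)) ((‖PS‖ + γ * ‖PU‖) * (1 + γ))
  refine ⟨ε, hε, fun L' hL' v hv hcone => ?_⟩
  obtain ⟨hPSL, hPUL⟩ : PS (L v) = L (PS v) ∧ PU (L v) = L (PU v) :=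
    projections_map_eq_of_invariant (PS := PS) (PU := PU) hSU hPSmem hPUmem hsum hLS hLU v
  exact norm_lt_mul_norm_of_near_dominated hsum ha hγ hε.le hsmall hv hcone
    (hPSL ▸ hLs _ (hPSmem v)) (hPUL ▸ hLu _ (hPUmem v)) (hL' v)

end Cone

/-- Cone-invariance lemma (forward half): a linear map `L'` close enough to a
hyperbolic-split linear map `L` maps the `γ`-unstable cone minus the origin
strictly into the `γ`-unstable cone. -/
theorem stmt0
    {V : Type*} [NormedAddCommGroup V] [NormedSpace ℝ V] [FiniteDimensional ℝ V]
    (S U : Submodule ℝ V) (hSU : IsCompl S U)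
    (PS PU : V →ₗ[ℝ] V)
    (hPSmem : ∀ v, PS v ∈ S) (hPUmem : ∀ v, PU v ∈ U)
    (hsum : ∀ v, PS v + PU v = v)
    (lam : ℝ) (hlam0 : 0 < lam) (hlam1 : lam < 1)
    (n : ℕ) (hn : 1 ≤ n)
    (gam : ℝ) (hgam0 : 0 < gam) (hgam1 : gam < 1)
    (L : V →ₗ[ℝ] V)
    (hLS : ∀ s ∈ S, L s ∈ S) (hLU : ∀ u ∈ U, L u ∈ U)
    (hLs : ∀ s ∈ S, ‖L s‖ ≤ lam ^ n * ‖s‖)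
    (hLu : ∀ u ∈ U, lam⁻¹ ^ n * ‖u‖ ≤ ‖L u‖) :
    ∃ ε > (0 : ℝ), ∀ L' : V →ₗ[ℝ] V, (∀ v, ‖L' v - L v‖ ≤ ε * ‖v‖) →
      ∀ v : V, v ≠ 0 → ‖PS v‖ ≤ gam * ‖PU v‖ →
        ‖PS (L' v)‖ < gam * ‖PU (L' v)‖ := by
  have hdom : lam ^ n < lam⁻¹ ^ n :=
    (pow_lt_one₀ hlam0.le hlam1 (Nat.one_le_iff_ne_zero.mp hn)).trans_le
      (one_le_pow₀ ((one_le_inv₀ hlam0).mpr hlam1.le))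
  exact stmt0_general (PS := PS.toContinuousLinearMap) (PU := PU.toContinuousLinearMap)
    hSU.disjoint hPSmem hPUmem hsum (pow_nonneg hlam0.le n) hdom hgam0 hLS hLU hLs hLu
end

section
/- Let V be a finite-dimensional real normed vector space with complementary subspaces S and U (V = S ⊕ U), and let P_S, P_U denote the linear projections onto S along U and onto U along S. Let λ ∈ (0,1), n ≥ 1 a natural number, and γ ∈ (0,1). Let L : V → V be a linear map with L(S) ⊆ S, L(U) ⊆ U, ‖L s‖ ≤ λ^n ‖s‖ for all s ∈ S, and ‖L u‖ ≥ λ^{-n} ‖u‖ for all u ∈ U. Then there exists ε > 0 such that for every invertible linear map L' : V → V satisfying ‖L' v − L v‖ ≤ ε‖v‖ for all v ∈ V, and for every nonzero v ∈ V with ‖P_U v‖ ≤ γ‖P_S v‖, one has ‖P_U (L'^{-1} v)‖ < γ ‖P_S (L'^{-1} v)‖ (i.e. L'^{-1} maps the γ-stable cone minus the origin into the interior of the γ-stable cone). -/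
/-!
Backward invariance of the stable cone is the contrapositive of forward invariance of the
complementary cone `γ ‖P_S v‖ ≤ ‖P_U v‖`. On that cone `‖P_U v‖` controls `‖v‖`, so domination of
the rate on `S` by the rate on `U` makes the gap `‖P_U (L v)‖ - γ ‖P_S (L v)‖` at least a fixed
positive multiple of `‖v‖`. A perturbation of `L v` that is small relative to `‖v‖` cannot close it.
-/

theorem apply_map_eq_map_apply_of_disjoint {R M : Type*} [Ring R] [AddCommGroup M] [Module R M]
    {p q : Submodule R M} (hpq : Disjoint p q) {P Q : M → M}
    (hP : ∀ v, P v ∈ p) (hQ : ∀ v, Q v ∈ q) (hPQ : ∀ v, P v + Q v = v)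
    {L : M →ₗ[R] M} (hLp : ∀ x ∈ p, L x ∈ p) (hLq : ∀ x ∈ q, L x ∈ q) (v : M) :
    P (L v) = L (P v) := by
  have hdecomp : P (L v) + Q (L v) = L (P v) + L (Q v) := by rw [hPQ, ← map_add, hPQ]
  have hmem_p : P (L v) - L (P v) ∈ p := p.sub_mem (hP _) (hLp _ (hP v))
  have hmem_q : P (L v) - L (P v) ∈ q := by
    rw [sub_eq_sub_iff_add_eq_add.2 (hdecomp.trans (add_comm _ _))]
    exact q.sub_mem (hLq _ (hQ v)) (hQ _)
  exact sub_eq_zero.1 (Submodule.disjoint_def.1 hpq _ hmem_p hmem_q)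

theorem mul_norm_add_le_of_mul_norm_le {E : Type*} [SeminormedAddGroup E] {γ : ℝ} (hγ : 0 ≤ γ)
    {s u : E} (hsu : γ * ‖s‖ ≤ ‖u‖) : γ * ‖s + u‖ ≤ (1 + γ) * ‖u‖ :=
  calc γ * ‖s + u‖ ≤ γ * (‖s‖ + ‖u‖) := by gcongr; exact norm_add_le s u
    _ ≤ (1 + γ) * ‖u‖ := by linarith

theorem mul_norm_add_le_norm_sub_mul_norm_of_dominated {E F G : Type*} [SeminormedAddGroup E]
    [SeminormedAddGroup F] [SeminormedAddGroup G] {γ μ ν : ℝ} (hγ : 0 ≤ γ) (hμ : 0 ≤ μ)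
    (hμν : μ ≤ ν) {s u : E} {s' : F} {u' : G} (hsu : γ * ‖s‖ ≤ ‖u‖)
    (hs : ‖s'‖ ≤ μ * ‖s‖) (hu : ν * ‖u‖ ≤ ‖u'‖) :
    γ * (ν - μ) * ‖s + u‖ ≤ (1 + γ) * (‖u'‖ - γ * ‖s'‖) := by
  have hs' : γ * ‖s'‖ ≤ μ * ‖u‖ :=
    calc γ * ‖s'‖ ≤ γ * (μ * ‖s‖) := by gcongr
      _ = μ * (γ * ‖s‖) := by ring
      _ ≤ μ * ‖u‖ := by gcongr
  calc γ * (ν - μ) * ‖s + u‖ = (ν - μ) * (γ * ‖s + u‖) := by ring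
    _ ≤ (ν - μ) * ((1 + γ) * ‖u‖) :=
      mul_le_mul_of_nonneg_left (mul_norm_add_le_of_mul_norm_le hγ hsu) (sub_nonneg.2 hμν)
    _ = (1 + γ) * (ν * ‖u‖ - μ * ‖u‖) := by ring
    _ ≤ (1 + γ) * (‖u'‖ - γ * ‖s'‖) := by gcongr

section Perturbation

variable {𝕜 E F G : Type*} [NontriviallyNormedField 𝕜]
  [SeminormedAddCommGroup E] [NormedSpace 𝕜 E] [SeminormedAddCommGroup F] [NormedSpace 𝕜 F]
  [SeminormedAddCommGroup G] [NormedSpace 𝕜 G]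

theorem norm_apply_le_norm_apply_add_opNorm_mul_norm_sub (A : E →L[𝕜] F) (x y : E) :
    ‖A x‖ ≤ ‖A y‖ + ‖A‖ * ‖x - y‖ :=
  calc ‖A x‖ ≤ ‖A y‖ + ‖A x - A y‖ := norm_le_norm_add_norm_sub' _ _
    _ = ‖A y‖ + ‖A (x - y)‖ := by rw [map_sub]
    _ ≤ ‖A y‖ + ‖A‖ * ‖x - y‖ := by gcongr; exact A.le_opNorm _

theorem mul_norm_apply_lt_norm_apply_of_mul_norm_sub_lt {γ : ℝ} (hγ : 0 ≤ γ)
    (A : E →L[𝕜] F) (B : E →L[𝕜] G) {x y : E}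
    (hxy : (γ * ‖A‖ + ‖B‖) * ‖x - y‖ < ‖B y‖ - γ * ‖A y‖) :
    γ * ‖A x‖ < ‖B x‖ := by
  have hA : γ * ‖A x‖ ≤ γ * (‖A y‖ + ‖A‖ * ‖x - y‖) := by
    gcongr
    exact norm_apply_le_norm_apply_add_opNorm_mul_norm_sub A x y
  have hB : ‖B y‖ ≤ ‖B x‖ + ‖B‖ * ‖x - y‖ := by
    rw [norm_sub_rev]
    exact norm_apply_le_norm_apply_add_opNorm_mul_norm_sub B y x
  linarith

end Perturbation

theorem stmt1_general {𝕜 V : Type*} [NontriviallyNormedField 𝕜] [NormedAddCommGroup V]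
    [NormedSpace 𝕜 V] {S U : Submodule 𝕜 V} (hSU : Disjoint S U) (PS PU : V →L[𝕜] V)
    (hPSmem : ∀ v, PS v ∈ S) (hPUmem : ∀ v, PU v ∈ U) (hsum : ∀ v, PS v + PU v = v)
    {μ ν γ : ℝ} (hμ : 0 ≤ μ) (hμν : μ < ν) (hγ : 0 < γ) {L : V →ₗ[𝕜] V}
    (hLS : ∀ s ∈ S, L s ∈ S) (hLU : ∀ u ∈ U, L u ∈ U)
    (hLs : ∀ s ∈ S, ‖L s‖ ≤ μ * ‖s‖) (hLu : ∀ u ∈ U, ν * ‖u‖ ≤ ‖L u‖) :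
    ∃ ε > (0 : ℝ), ∀ f : V → V, (∀ v, ‖f v - L v‖ ≤ ε * ‖v‖) →
      ∀ v : V, v ≠ 0 → ‖PU (f v)‖ ≤ γ * ‖PS (f v)‖ → ‖PU v‖ < γ * ‖PS v‖ := by
  obtain ⟨ε, hε, hεK⟩ := exists_pos_mul_lt (mul_pos hγ (sub_pos.2 hμν))
    ((1 + γ) * (γ * ‖PS‖ + ‖PU‖))
  refine ⟨ε, hε, fun f hf v hv => ?_⟩
  contrapose!
  intro hcone
  have hPSL : PS (L v) = L (PS v) :=
    apply_map_eq_map_apply_of_disjoint hSU hPSmem hPUmem hsum hLS hLU v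
  have hPUL : PU (L v) = L (PU v) := apply_map_eq_map_apply_of_disjoint hSU.symm hPUmem hPSmem
    (fun w => (add_comm _ _).trans (hsum w)) hLU hLS v
  have hgap : γ * (ν - μ) * ‖v‖ ≤ (1 + γ) * (‖PU (L v)‖ - γ * ‖PS (L v)‖) := by
    rw [hPSL, hPUL]
    simpa only [hsum] using mul_norm_add_le_norm_sub_mul_norm_of_dominated hγ.le hμ hμν.le hcone
      (hLs _ (hPSmem v)) (hLu _ (hPUmem v))
  refine mul_norm_apply_lt_norm_apply_of_mul_norm_sub_lt hγ.le PS PU (y := L v) ?_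
  refine lt_of_mul_lt_mul_left ?_ (by positivity : 0 ≤ 1 + γ)
  calc (1 + γ) * ((γ * ‖PS‖ + ‖PU‖) * ‖f v - L v‖)
      ≤ (1 + γ) * ((γ * ‖PS‖ + ‖PU‖) * (ε * ‖v‖)) := by gcongr; exact hf v
    _ = (1 + γ) * (γ * ‖PS‖ + ‖PU‖) * ε * ‖v‖ := by ring
    _ < γ * (ν - μ) * ‖v‖ := mul_lt_mul_of_pos_right hεK (norm_pos_iff.2 hv)
    _ ≤ (1 + γ) * (‖PU (L v)‖ - γ * ‖PS (L v)‖) := hgap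

/-- Cone-invariance lemma (backward half): the inverse of an invertible linear map `L'`
close enough to a hyperbolic-split linear map `L` maps the `γ`-stable cone minus the
origin strictly into the `γ`-stable cone. -/
theorem stmt1
    {V : Type*} [NormedAddCommGroup V] [NormedSpace ℝ V] [FiniteDimensional ℝ V]
    (S U : Submodule ℝ V) (hSU : IsCompl S U)
    (PS PU : V →ₗ[ℝ] V)
    (hPSmem : ∀ v, PS v ∈ S) (hPUmem : ∀ v, PU v ∈ U)
    (hsum : ∀ v, PS v + PU v = v)
    (lam : ℝ) (hlam0 : 0 < lam) (hlam1 : lam < 1)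
    (n : ℕ) (hn : 1 ≤ n)
    (gam : ℝ) (hgam0 : 0 < gam) (hgam1 : gam < 1)
    (L : V →ₗ[ℝ] V)
    (hLS : ∀ s ∈ S, L s ∈ S) (hLU : ∀ u ∈ U, L u ∈ U)
    (hLs : ∀ s ∈ S, ‖L s‖ ≤ lam ^ n * ‖s‖)
    (hLu : ∀ u ∈ U, lam⁻¹ ^ n * ‖u‖ ≤ ‖L u‖) :
    ∃ ε > (0 : ℝ), ∀ L' : V ≃ₗ[ℝ] V, (∀ v, ‖L' v - L v‖ ≤ ε * ‖v‖) →
      ∀ v : V, v ≠ 0 → ‖PU v‖ ≤ gam * ‖PS v‖ →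
        ‖PU (L'.symm v)‖ < gam * ‖PS (L'.symm v)‖ := by
  have hrates : lam ^ n < lam⁻¹ ^ n :=
    pow_lt_pow_left₀ (hlam1.trans ((one_lt_inv₀ hlam0).2 hlam1)) hlam0.le (by omega)
  obtain ⟨ε, hε, hstable⟩ := stmt1_general hSU.disjoint PS.toContinuousLinearMap
    PU.toContinuousLinearMap hPSmem hPUmem hsum (by positivity) hrates hgam0 hLS hLU hLs hLu
  exact ⟨ε, hε, fun L' hL' v hv hcone =>
    hstable L' hL' (L'.symm v) (by simpa using hv) (by simpa using hcone)⟩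
end

section
/- Let V be a finite-dimensional real normed vector space with complementary subspaces S and U (V = S ⊕ U), and let P_S, P_U denote the linear projections onto S along U and onto U along S. Let γ > 0 and μ > 0. Let L : V → V be a linear map with L(S) ⊆ S, L(U) ⊆ U, and ‖L u‖ ≤ μ‖u‖ for all u ∈ U, and suppose L maps the γ-unstable cone C_u^γ = {v ∈ V : ‖P_S v‖ ≤ γ‖P_U v‖} into itself. Then for every v ∈ C_u^γ one has ‖L v‖ ≤ (1+γ)·μ·‖P_U‖·‖v‖, where ‖P_U‖ is the operator norm of the projection P_U. In particular, if (1+γ)·μ·‖P_U‖ < 1, then L contracts every vector of the cone C_u^γ. -/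
section Projections

variable {R M : Type*} [Ring R] [AddCommGroup M] [Module R M] {S U : Submodule R M}

theorem eq_right_of_add_eq_add_of_disjoint (hSU : Disjoint S U) {s s' u u' : M}
    (hs : s ∈ S) (hs' : s' ∈ S) (hu : u ∈ U) (hu' : u' ∈ U) (h : s + u = s' + u') :
    u = u' := by
  have h_sub : s - s' + (u - u') = 0 := by
    rw [sub_add_sub_comm, h, sub_self]
  have h_zero : s - s' = 0 ∧ u - u' = 0 :=
    Submodule.disjoint_iff_add_eq_zero.mp hSU (S.sub_mem hs hs') (U.sub_mem hu hu') h_sub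
  exact sub_eq_zero.mp h_zero.2

theorem proj_map_eq_map_proj (hSU : Disjoint S U) {PS PU : M → M}
    (hPS : ∀ v, PS v ∈ S) (hPU : ∀ v, PU v ∈ U) (h_add : ∀ v, PS v + PU v = v)
    {L : M →ₗ[R] M} (hLS : Set.MapsTo L S S) (hLU : Set.MapsTo L U U) (v : M) :
    PU (L v) = L (PU v) := by
  have h_decomp : PS (L v) + PU (L v) = L (PS v) + L (PU v) := by
    rw [h_add, ← map_add, h_add]
  exact eq_right_of_add_eq_add_of_disjoint hSU (hPS _) (hLS (hPS v)) (hPU _)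
    (hLU (hPU v)) h_decomp

end Projections

section UnstableCone

variable {V : Type*} [SeminormedAddCommGroup V]

/-- The `γ`-unstable cone `C_u^γ` of a splitting `V = S ⊕ U`: the vectors whose stable component
is at most `γ` times as long as their unstable one. The splitting enters only through the maps
`PS` and `PU` that take a vector to its two components. -/
def unstableCone (PS PU : V → V) (γ : ℝ) : Set V :=
  {v | ‖PS v‖ ≤ γ * ‖PU v‖}

theorem norm_le_of_mem_unstableCone {PS PU : V → V} {γ : ℝ} {v : V}
    (h_add : PS v + PU v = v) (hv : v ∈ unstableCone PS PU γ) :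
    ‖v‖ ≤ (1 + γ) * ‖PU v‖ :=
  calc ‖v‖ = ‖PS v + PU v‖ := by rw [h_add]
    _ ≤ ‖PS v‖ + ‖PU v‖ := norm_add_le _ _
    _ ≤ γ * ‖PU v‖ + ‖PU v‖ := by gcongr; exact hv
    _ = (1 + γ) * ‖PU v‖ := by ring

theorem norm_map_le_of_mem_unstableCone {R : Type*} [Ring R] [Module R V] {S U : Submodule R V}
    (hSU : Disjoint S U) {PS PU : V → V}
    (hPS : ∀ v, PS v ∈ S) (hPU : ∀ v, PU v ∈ U) (h_add : ∀ v, PS v + PU v = v)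
    {γ μ : ℝ} (hγ : 0 ≤ γ) {L : V →ₗ[R] V} (hLS : Set.MapsTo L S S) (hLU : Set.MapsTo L U U)
    (hLμ : ∀ u ∈ U, ‖L u‖ ≤ μ * ‖u‖) {v : V} (hLv : L v ∈ unstableCone PS PU γ) :
    ‖L v‖ ≤ (1 + γ) * (μ * ‖PU v‖) :=
  calc ‖L v‖ ≤ (1 + γ) * ‖PU (L v)‖ := norm_le_of_mem_unstableCone (h_add _) hLv
    _ = (1 + γ) * ‖L (PU v)‖ := by rw [proj_map_eq_map_proj hSU hPS hPU h_add hLS hLU]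
    _ ≤ (1 + γ) * (μ * ‖PU v‖) := by gcongr; exact hLμ _ (hPU v)

end UnstableCone

theorem stmt2_general {𝕜 V : Type*} [NontriviallyNormedField 𝕜] [NormedAddCommGroup V]
    [NormedSpace 𝕜 V] {S U : Submodule 𝕜 V} (hSU : Disjoint S U) {PS PU : V →L[𝕜] V}
    (hPS : ∀ v, PS v ∈ S) (hPU : ∀ v, PU v ∈ U) (h_add : ∀ v, PS v + PU v = v)
    {γ μ : ℝ} (hγ : 0 ≤ γ) (hμ : 0 ≤ μ) {L : V →ₗ[𝕜] V}
    (hLS : Set.MapsTo L S S) (hLU : Set.MapsTo L U U) (hLμ : ∀ u ∈ U, ‖L u‖ ≤ μ * ‖u‖)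
    (h_cone : Set.MapsTo L (unstableCone PS PU γ) (unstableCone PS PU γ)) :
    (∀ v ∈ unstableCone PS PU γ, ‖L v‖ ≤ (1 + γ) * μ * ‖PU‖ * ‖v‖) ∧
      ((1 + γ) * μ * ‖PU‖ < 1 → ∀ v, v ≠ 0 → v ∈ unstableCone PS PU γ → ‖L v‖ < ‖v‖) := by
  have h_bound : ∀ v ∈ unstableCone PS PU γ, ‖L v‖ ≤ (1 + γ) * μ * ‖PU‖ * ‖v‖ := fun v hv =>
    calc ‖L v‖ ≤ (1 + γ) * (μ * ‖PU v‖) :=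
          norm_map_le_of_mem_unstableCone hSU hPS hPU h_add hγ hLS hLU hLμ (h_cone hv)
      _ ≤ (1 + γ) * (μ * (‖PU‖ * ‖v‖)) := by gcongr; exact PU.le_opNorm v
      _ = (1 + γ) * μ * ‖PU‖ * ‖v‖ := by ring
  exact ⟨h_bound, fun h_rate v hv₀ hv =>
    (h_bound v hv).trans_lt (mul_lt_of_lt_one_left (norm_pos_iff.mpr hv₀) h_rate)⟩

/-- Vectors in an invariant unstable cone are uniformly contracted (Lemma 4.3):
if `L` preserves the splitting, contracts `U` by a factor `μ`, and maps the
`γ`-unstable cone into itself, then `‖L v‖ ≤ (1+γ)·μ·‖P_U‖·‖v‖` on the cone;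
in particular `L` contracts every vector of the cone when `(1+γ)·μ·‖P_U‖ < 1`. -/
theorem stmt2
    {V : Type*} [NormedAddCommGroup V] [NormedSpace ℝ V] [FiniteDimensional ℝ V]
    (S U : Submodule ℝ V) (hSU : IsCompl S U)
    (PS PU : V →L[ℝ] V)
    (hPSmem : ∀ v, PS v ∈ S) (hPUmem : ∀ v, PU v ∈ U)
    (hsum : ∀ v, PS v + PU v = v)
    (gam mu : ℝ) (hgam : 0 < gam) (hmu : 0 < mu)
    (L : V →ₗ[ℝ] V)
    (hLS : ∀ s ∈ S, L s ∈ S) (hLU : ∀ u ∈ U, L u ∈ U)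
    (hLu : ∀ u ∈ U, ‖L u‖ ≤ mu * ‖u‖)
    (hcone : ∀ v, ‖PS v‖ ≤ gam * ‖PU v‖ → ‖PS (L v)‖ ≤ gam * ‖PU (L v)‖) :
    (∀ v, ‖PS v‖ ≤ gam * ‖PU v‖ → ‖L v‖ ≤ (1 + gam) * mu * ‖PU‖ * ‖v‖) ∧
      ((1 + gam) * mu * ‖PU‖ < 1 →
        ∀ v, v ≠ 0 → ‖PS v‖ ≤ gam * ‖PU v‖ → ‖L v‖ < ‖v‖) :=
  stmt2_general hSU.disjoint hPSmem hPUmem hsum hgam.le hmu.le hLS hLU hLu hcone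
end

section
/- Let V be a finite-dimensional real normed vector space and l a natural number. Let (T_i)_{i ∈ ℕ} be a decreasing sequence of closed subsets of V (T_{i+1} ⊆ T_i for all i) such that each T_i contains some l-dimensional linear subspace of V. Then the intersection ∩_{i ∈ ℕ} T_i contains an l-dimensional linear subspace of V. -/
/-!
In a finite-dimensional inner product space, record an `l`-dimensional subspace by an orthonormal
frame spanning it. Orthonormal frames form a compact set, and for closed `S` the condition that the
span lies in `S` is closed, because it says that each fixed linear combination of the frame lies in
`S`. The frames spanning subspaces of the `T i` are therefore nested nonempty compact sets, and a
common frame spans the desired subspace: orthonormality keeps its dimension from dropping. The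
problem is invariant under linear homeomorphism, so the ambient space may be taken Euclidean.
-/

open Module Submodule Set

theorem isClosed_setOf_span_range_subset {R M κ : Type*} [Semiring R] [AddCommMonoid M] [Module R M]
    [TopologicalSpace M] [ContinuousAdd M] [ContinuousConstSMul R M] {S : Set M}
    (hS : IsClosed S) : IsClosed {v : κ → M | (span R (range v) : Set M) ⊆ S} := by
  have span_subset_iff (v : κ → M) :
      (span R (range v) : Set M) ⊆ S ↔ ∀ c : κ →₀ R, (c.sum fun k r ↦ r • v k) ∈ S := by
    simp only [subset_def, SetLike.mem_coe, Finsupp.mem_span_range_iff_exists_finsupp,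
      forall_exists_index, forall_apply_eq_imp_iff]
  simp only [span_subset_iff, ofPred_forall]
  refine isClosed_iInter fun c ↦ hS.preimage ?_
  unfold Finsupp.sum
  fun_prop

theorem exists_submodule_finrank_eq_subset_preimage_iff {R M N : Type*} [Semiring R]
    [AddCommMonoid M] [Module R M] [AddCommMonoid N] [Module R N] (e : M ≃ₗ[R] N) {l : ℕ}
    {S : Set N} :
    (∃ W : Submodule R M, finrank R W = l ∧ (W : Set M) ⊆ e ⁻¹' S) ↔
      ∃ W : Submodule R N, finrank R W = l ∧ (W : Set N) ⊆ S :=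
  (orderIsoMapComap e).toEquiv.exists_congr fun W ↦ by
    have finrank_eq : finrank R (orderIsoMapComap e W) = finrank R W := e.finrank_map_eq W
    simp [finrank_eq]

section InnerProductSpace

variable {𝕜 E : Type*} [RCLike 𝕜] [NormedAddCommGroup E] [InnerProductSpace 𝕜 E]

theorem isClosed_setOf_orthonormal {κ : Type*} : IsClosed {v : κ → E | Orthonormal 𝕜 v} := by
  classical
  simp only [orthonormal_iff_ite, ofPred_forall]
  exact isClosed_iInter fun j ↦ isClosed_iInter fun k ↦ isClosed_eq (by fun_prop) continuous_const

theorem isCompact_setOf_orthonormal [ProperSpace E] {κ : Type*} :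
    IsCompact {v : κ → E | Orthonormal 𝕜 v} :=
  (isCompact_univ_pi fun _ ↦ isCompact_sphere (0 : E) 1).of_isClosed_subset
    isClosed_setOf_orthonormal fun _ hv k _ ↦ mem_sphere_zero_iff_norm.2 (hv.norm_eq_one k)

theorem exists_orthonormal_span_range_eq (W : Submodule 𝕜 E) [FiniteDimensional 𝕜 W] :
    ∃ v : Fin (finrank 𝕜 W) → E, Orthonormal 𝕜 v ∧ span 𝕜 (range v) = W := by
  let b := stdOrthonormalBasis 𝕜 W
  refine ⟨W.subtypeₗᵢ ∘ b, b.orthonormal.comp_linearIsometry W.subtypeₗᵢ, ?_⟩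
  have span_b : span 𝕜 (range b) = ⊤ := by
    rw [← b.coe_toBasis, b.toBasis.span_eq]
  calc span 𝕜 (range (W.subtypeₗᵢ ∘ b))
      = (span 𝕜 (range b)).map W.subtype := by rw [map_span, ← range_comp]; rfl
    _ = W := by rw [span_b, map_subtype_top]

variable (𝕜) in
/-- The orthonormal `l`-frames, i.e. orthonormal families indexed by `Fin l`, whose span is
contained in the set `S`. They parametrize, with repetitions, the `l`-dimensional subspaces
contained in `S`, and make compactness available for these. -/
def orthonormalFramesIn (l : ℕ) (S : Set E) : Set (Fin l → E) :=
  {v | Orthonormal 𝕜 v} ∩ {v | (span 𝕜 (range v) : Set E) ⊆ S}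

theorem orthonormalFramesIn_mono {l : ℕ} {S S' : Set E} (h : S ⊆ S') :
    orthonormalFramesIn 𝕜 l S ⊆ orthonormalFramesIn 𝕜 l S' :=
  fun _ hv ↦ ⟨hv.1, hv.2.trans h⟩

theorem orthonormalFramesIn_iInter {ι : Type*} [Nonempty ι] {l : ℕ} (T : ι → Set E) :
    orthonormalFramesIn 𝕜 l (⋂ i, T i) = ⋂ i, orthonormalFramesIn 𝕜 l (T i) := by
  simp only [orthonormalFramesIn, subset_iInter_iff, ofPred_forall, inter_iInter]

theorem isCompact_orthonormalFramesIn [ProperSpace E] {l : ℕ} {S : Set E} (hS : IsClosed S) :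
    IsCompact (orthonormalFramesIn 𝕜 l S) :=
  isCompact_setOf_orthonormal.inter_right (isClosed_setOf_span_range_subset hS)

theorem orthonormalFramesIn_nonempty_iff [FiniteDimensional 𝕜 E] {l : ℕ} {S : Set E} :
    (orthonormalFramesIn 𝕜 l S).Nonempty ↔
      ∃ W : Submodule 𝕜 E, finrank 𝕜 W = l ∧ (W : Set E) ⊆ S := by
  constructor
  · rintro ⟨v, orthonormal_v, span_subset⟩
    refine ⟨span 𝕜 (range v), ?_, span_subset⟩
    rw [finrank_span_eq_card orthonormal_v.linearIndependent, Fintype.card_fin]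
  · rintro ⟨W, rfl, W_subset⟩
    obtain ⟨v, orthonormal_v, span_eq⟩ := exists_orthonormal_span_range_eq W
    exact ⟨v, orthonormal_v, (congrArg _ span_eq).trans_subset W_subset⟩

theorem orthonormalFramesIn_iInter_nonempty [ProperSpace E] {ι : Type*} [Nonempty ι] {l : ℕ}
    {T : ι → Set E} (hclosed : ∀ i, IsClosed (T i)) (hdir : Directed (· ⊇ ·) T)
    (hne : ∀ i, (orthonormalFramesIn 𝕜 l (T i)).Nonempty) :
    (orthonormalFramesIn 𝕜 l (⋂ i, T i)).Nonempty := by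
  rw [orthonormalFramesIn_iInter]
  exact IsCompact.nonempty_iInter_of_directed_nonempty_isCompact_isClosed _
    (Directed.mono_comp (· ⊇ ·) (g := orthonormalFramesIn 𝕜 l)
      (fun _ _ h ↦ orthonormalFramesIn_mono h) hdir) hne
    (fun i ↦ isCompact_orthonormalFramesIn (hclosed i))
    (fun i ↦ (isCompact_orthonormalFramesIn (hclosed i)).isClosed)

end InnerProductSpace

theorem stmt3_general {𝕜 V ι : Type*} [RCLike 𝕜] [AddCommGroup V] [Module 𝕜 V]
    [TopologicalSpace V] [IsTopologicalAddGroup V] [ContinuousSMul 𝕜 V] [T2Space V]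
    [FiniteDimensional 𝕜 V] [Nonempty ι] (l : ℕ) (T : ι → Set V)
    (hclosed : ∀ i, IsClosed (T i)) (hdir : Directed (· ⊇ ·) T)
    (hsub : ∀ i, ∃ W : Submodule 𝕜 V, finrank 𝕜 W = l ∧ (W : Set V) ⊆ T i) :
    ∃ W : Submodule 𝕜 V, finrank 𝕜 W = l ∧ (W : Set V) ⊆ ⋂ i, T i := by
  let e : EuclideanSpace 𝕜 (Fin (finrank 𝕜 V)) ≃L[𝕜] V :=
    ContinuousLinearEquiv.ofFinrankEq finrank_euclideanSpace_fin
  have frames_nonempty_iff (S : Set V) : (orthonormalFramesIn 𝕜 l (e ⁻¹' S)).Nonempty ↔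
      ∃ W : Submodule 𝕜 V, finrank 𝕜 W = l ∧ (W : Set V) ⊆ S :=
    orthonormalFramesIn_nonempty_iff.trans
      (exists_submodule_finrank_eq_subset_preimage_iff e.toLinearEquiv)
  rw [← frames_nonempty_iff, preimage_iInter]
  exact orthonormalFramesIn_iInter_nonempty (fun i ↦ (hclosed i).preimage e.continuous)
    (Directed.mono_comp (· ⊇ ·) (g := preimage e) (fun _ _ h ↦ preimage_mono h) hdir)
    fun i ↦ (frames_nonempty_iff (T i)).2 (hsub i)

/-- Nested closed sets each containing an `l`-dimensional subspace have an
`l`-dimensional subspace in their intersection (compactness argument of Lemma 4.4). -/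
theorem stmt3
    {V : Type*} [NormedAddCommGroup V] [NormedSpace ℝ V] [FiniteDimensional ℝ V]
    (l : ℕ) (T : ℕ → Set V)
    (hclosed : ∀ i, IsClosed (T i))
    (hdec : ∀ i, T (i + 1) ⊆ T i)
    (hsub : ∀ i, ∃ W : Submodule ℝ V, Module.finrank ℝ W = l ∧ (W : Set V) ⊆ T i) :
    ∃ W : Submodule ℝ V, Module.finrank ℝ W = l ∧ (W : Set V) ⊆ ⋂ i, T i :=
  stmt3_general l T hclosed (antitone_nat_of_succ_le hdec).directed_ge hsub
end

section
/- Let d ≥ 1 and let A : ℝ^d → ℝ^d be a linear automorphism which is hyperbolic in the following sense: there are subspaces S, U of ℝ^d with ℝ^d = S ⊕ U, A(S) = S, A(U) = U, and constants C > 0, λ ∈ (0,1) such that ‖A^n s‖ ≤ Cλ^n‖s‖ for all n ≥ 0 and s ∈ S, and ‖A^{-n} u‖ ≤ Cλ^n‖u‖ for all n ≥ 0 and u ∈ U. Let E be a compact topological space, F : E → E a homeomorphism, and r : E → ℝ^d a continuous map. Then there exists a continuous map w : E → ℝ^d such that A(w(e)) − w(F(e)) = r(e) for all e ∈ E. -/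
/-!
On the Banach space of bounded continuous maps `E → X`, consider the operator `T v = B ∘ v ∘ G`.
Since `Tⁿ q = Bⁿ ∘ q ∘ Gⁿ`, the Neumann series `∑ Tⁿ q` converges as soon as the powers of `B` decay
summably on the range of `q`, and its sum `v` solves `v - T v = q`. After a change of unknown, the
cohomological equation `A (w e) - w (F e) = q e` takes this form in two ways: with `B = A` and
`G = F⁻¹` (`w = -v ∘ F⁻¹`), whose series converges when `q` is `S`-valued, and with `B = A⁻¹` and
`G = F` (`w = A⁻¹ ∘ v`), whose series converges when `q` is `U`-valued. By linearity it suffices to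
split `r` into its `S`- and `U`-components.
-/

open scoped BoundedContinuousFunction

theorem tsum_pow_apply_sub_apply_tsum_pow_apply {R V : Type*} [Semiring R] [AddCommGroup V]
    [Module R V] [TopologicalSpace V] [IsTopologicalAddGroup V] [T2Space V]
    {T : V →L[R] V} {x : V} (hx : Summable fun n : ℕ => (T ^ n) x) :
    (∑' n : ℕ, (T ^ n) x) - T (∑' n : ℕ, (T ^ n) x) = x := by
  rw [T.map_tsum hx, sub_eq_iff_eq_add, hx.tsum_eq_zero_add]
  simp only [pow_zero, pow_succ', one_apply_eq_self, mul_apply_eq_comp]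

section TwistedTransfer

variable {𝕜 X E : Type*} [NontriviallyNormedField 𝕜] [NormedAddCommGroup X] [NormedSpace 𝕜 X]
  [TopologicalSpace E]

/-- The twisted transfer operator `v ↦ B ∘ v ∘ G` on bounded continuous maps `E → X`; the
cohomological equations below are solved by inverting `1 - twistedTransfer B G`. -/
noncomputable def twistedTransfer (B : X →L[𝕜] X) (G : C(E, E)) : (E →ᵇ X) →L[𝕜] (E →ᵇ X) :=
  B.compLeftContinuousBounded E ∘L BoundedContinuousFunction.compContinuousCLM X 𝕜 G

@[simp]
theorem twistedTransfer_apply (B : X →L[𝕜] X) (G : C(E, E)) (v : E →ᵇ X) (e : E) :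
    twistedTransfer B G v e = B (v (G e)) :=
  rfl

theorem twistedTransfer_pow_apply (B : X →L[𝕜] X) (G : C(E, E)) (n : ℕ) (v : E →ᵇ X) (e : E) :
    (twistedTransfer B G ^ n) v e = B^[n] (v (G^[n] e)) := by
  induction n generalizing e with
  | zero => rfl
  | succ n ih =>
    rw [pow_succ', mul_apply_eq_comp, twistedTransfer_apply, ih,
      Function.iterate_succ_apply', Function.iterate_succ_apply]

variable {q : E →ᵇ X}

theorem norm_twistedTransfer_pow_le {B : X →L[𝕜] X} (G : C(E, E)) {n : ℕ} {c : ℝ}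
    (hB : ∀ e, ‖B^[n] (q e)‖ ≤ c * ‖q e‖) :
    ‖(twistedTransfer B G ^ n) q‖ ≤ |c| * ‖q‖ := by
  refine (BoundedContinuousFunction.norm_le (by positivity)).2 fun e => ?_
  calc ‖(twistedTransfer B G ^ n) q e‖
      = ‖B^[n] (q (G^[n] e))‖ := by rw [twistedTransfer_pow_apply]
    _ ≤ c * ‖q (G^[n] e)‖ := hB _
    _ ≤ |c| * ‖q‖ := by
      gcongr
      · exact le_abs_self _
      · exact q.norm_coe_le_norm _

variable [CompleteSpace X] {a : ℕ → ℝ}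

theorem exists_sub_twistedTransfer_eq {B : X →L[𝕜] X} (G : C(E, E)) (ha : Summable a)
    (hB : ∀ n e, ‖B^[n] (q e)‖ ≤ a n * ‖q e‖) :
    ∃ v : E →ᵇ X, v - twistedTransfer B G v = q :=
  have hsum : Summable fun n : ℕ => (twistedTransfer B G ^ n) q :=
    (ha.abs.mul_right ‖q‖).of_norm_bounded fun n => norm_twistedTransfer_pow_le G (hB n)
  ⟨_, tsum_pow_apply_sub_apply_tsum_pow_apply hsum⟩

theorem exists_apply_sub_comp_eq_of_summable_iterate {A : X →L[𝕜] X} (F : E ≃ₜ E)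
    (ha : Summable a) (hA : ∀ n e, ‖A^[n] (q e)‖ ≤ a n * ‖q e‖) :
    ∃ w : E →ᵇ X, ∀ e, A (w e) - w (F e) = q e := by
  obtain ⟨v, hv⟩ := exists_sub_twistedTransfer_eq (F.symm : C(E, E)) ha hA
  refine ⟨-v.compContinuous F.symm, fun e => ?_⟩
  simp [← hv, neg_add_eq_sub]

theorem exists_apply_sub_comp_eq_of_summable_iterate_symm {A : X ≃L[𝕜] X} (F : C(E, E))
    (ha : Summable a) (hA : ∀ n e, ‖A.symm^[n] (q e)‖ ≤ a n * ‖q e‖) :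
    ∃ w : E →ᵇ X, ∀ e, A (w e) - w (F e) = q e := by
  obtain ⟨v, hv⟩ := exists_sub_twistedTransfer_eq (B := (A.symm : X →L[𝕜] X)) F ha hA
  refine ⟨(A.symm : X →L[𝕜] X).compLeftContinuousBounded E v, fun e => ?_⟩
  simp [← hv]

theorem stmt7_general {A : X ≃L[𝕜] X} {S U : Submodule 𝕜 X} (hSU : S.IsTopCompl U)
    {b : ℕ → ℝ} (ha : Summable a) (hb : Summable b)
    (hS : ∀ n, ∀ s ∈ S, ‖A^[n] s‖ ≤ a n * ‖s‖)
    (hU : ∀ n, ∀ u ∈ U, ‖A.symm^[n] u‖ ≤ b n * ‖u‖)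
    (F : E ≃ₜ E) (r : E →ᵇ X) :
    ∃ w : E →ᵇ X, ∀ e, A (w e) - w (F e) = r e := by
  let rS : E →ᵇ X := (S.projectionL U hSU).compLeftContinuousBounded E r
  let rU : E →ᵇ X := (U.projectionL S hSU.symm).compLeftContinuousBounded E r
  obtain ⟨wS, hwS⟩ : ∃ w : E →ᵇ X, ∀ e, A (w e) - w (F e) = rS e :=
    exists_apply_sub_comp_eq_of_summable_iterate (A := (A : X →L[𝕜] X)) F ha fun n e =>
      hS n _ (Submodule.projectionL_apply_mem hSU (r e))
  obtain ⟨wU, hwU⟩ : ∃ w : E →ᵇ X, ∀ e, A (w e) - w (F e) = rU e :=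
    exists_apply_sub_comp_eq_of_summable_iterate_symm (F : C(E, E)) hb fun n e =>
      hU n _ (Submodule.projectionL_apply_mem hSU.symm (r e))
  refine ⟨wS + wU, fun e => ?_⟩
  calc A ((wS + wU) e) - (wS + wU) (F e)
      = (A (wS e) - wS (F e)) + (A (wU e) - wU (F e)) := by
        simp only [BoundedContinuousFunction.add_apply, map_add, add_sub_add_comm]
    _ = rS e + rU e := by rw [hwS, hwU]
    _ = r e := Submodule.projectionL_add_projectionL_eq_self hSU (r e)

end TwistedTransfer

/-- Proposition 5.1 (combined series construction): for a hyperbolic linear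
automorphism `A` of `ℝ^d` and a homeomorphism `F` of a compact space `E`, every
continuous `r : E → ℝ^d` admits a continuous solution `w` of the twisted
cohomological equation `A (w e) - w (F e) = r e`. -/
theorem stmt7
    (d : ℕ) (hd : 1 ≤ d)
    (A : (Fin d → ℝ) ≃ₗ[ℝ] (Fin d → ℝ))
    (S U : Submodule ℝ (Fin d → ℝ)) (hSU : IsCompl S U)
    (hAS : S.map (A : (Fin d → ℝ) →ₗ[ℝ] (Fin d → ℝ)) = S)
    (hAU : U.map (A : (Fin d → ℝ) →ₗ[ℝ] (Fin d → ℝ)) = U)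
    (C lam : ℝ) (hC : 0 < C) (hlam0 : 0 < lam) (hlam1 : lam < 1)
    (hstab : ∀ n : ℕ, ∀ s ∈ S, ‖(A ^ n) s‖ ≤ C * lam ^ n * ‖s‖)
    (hunst : ∀ n : ℕ, ∀ u ∈ U, ‖(A⁻¹ ^ n) u‖ ≤ C * lam ^ n * ‖u‖)
    {E : Type*} [TopologicalSpace E] [CompactSpace E]
    (F : E ≃ₜ E) (r : E → (Fin d → ℝ)) (hr : Continuous r) :
    ∃ w : E → (Fin d → ℝ), Continuous w ∧ ∀ e : E, A (w e) - w (F e) = r e := by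
  have hrate : Summable fun n => C * lam ^ n :=
    (summable_geometric_of_lt_one hlam0.le hlam1).mul_left C
  have hSU' : S.IsTopCompl U :=
    Submodule.IsCompl.isTopCompl_of_isClosed_of_finiteDimensional hSU S.closed_of_finiteDimensional
  obtain ⟨w, hw⟩ := stmt7_general (A := A.toContinuousLinearEquiv) hSU' hrate hrate
    (fun n s hs => A.pow_apply n s ▸ hstab n s hs)
    (fun n u hu => A⁻¹.pow_apply n u ▸ hunst n u hu) F (.mkOfCompact ⟨r, hr⟩)
  exact ⟨w, w.continuous, hw⟩
end

section
/- Let d ≥ 1, let 𝕋^d = ℝ^d/ℤ^d be the standard d-dimensional torus with quotient homomorphism π : ℝ^d → 𝕋^d. Let A be a d×d integer matrix with determinant ±1 which is hyperbolic: there are subspaces S, U of ℝ^d with ℝ^d = S ⊕ U, A(S) = S, A(U) = U, and constants C > 0, λ ∈ (0,1) such that ‖A^n s‖ ≤ Cλ^n‖s‖ and ‖A^{-n} u‖ ≤ Cλ^n‖u‖ for all n ≥ 0, s ∈ S, u ∈ U. Let L_A : 𝕋^d → 𝕋^d be the induced automorphism (L_A ∘ π = π ∘ (x ↦ Ax)).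 Let E be a compact topological space equipped with a continuous additive action of 𝕋^d, let G : E → E satisfy G(e + τ) = G(e) + L_A(τ) for all e ∈ E and τ ∈ 𝕋^d, and let F : E → E be a homeomorphism for which there exists a continuous map r̃ : E → ℝ^d with G(e) = F(e) + π(r̃(e)) for all e ∈ E. Then there exists a continuous map w : E → 𝕋^d such that the map h : E → E defined by h(e) = e + w(e) is continuous, satisfies h ∘ F = G ∘ h, and is homotopic to the identity of E. -/
/-- The quotient homomorphism `π : ℝ^d → 𝕋^d = ℝ^d/ℤ^d`, with `𝕋^d`
realized as `Fin d → AddCircle 1`. -/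
noncomputable def torusProj (d : ℕ) (x : Fin d → ℝ) : Fin d → AddCircle (1 : ℝ) :=
  fun i => (x i : AddCircle (1 : ℝ))

/-!
The equation `w ∘ F = A ∘ w + r` says that `w` is a fixed point of `w ↦ A ∘ w ∘ F⁻¹ + r ∘ F⁻¹` in
the Banach space of bounded continuous functions. The operator `w ↦ A ∘ w ∘ F⁻¹` inherits the
hyperbolicity of `A`, and `1 - A` is onto for a hyperbolic `A`: on the stable part its inverse is
the Neumann series `∑ Aⁿ`, on the unstable part it is `-∑ A⁻ⁿ⁻¹`. Translating each point `e` by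
`π (w e)` then gives the semiconjugacy, and translating it by `π (t • w e)` the homotopy.
-/

open Function BoundedContinuousFunction

section GeometricContraction

/-- The iterates of `T` contract the vectors of `S` at a uniform geometric rate. A hyperbolic
operator does so on its stable subspace, and its inverse does so on the unstable subspace. -/
def ContractsGeometricallyOn {V : Type*} [Norm V] (T : V → V) (S : Set V) : Prop :=
  ∃ C lam : ℝ, 0 ≤ C ∧ 0 ≤ lam ∧ lam < 1 ∧ ∀ n : ℕ, ∀ x ∈ S, ‖T^[n] x‖ ≤ C * lam ^ n * ‖x‖

variable {V : Type*} [NormedAddCommGroup V] [CompleteSpace V] {S U : Set V}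

theorem ContractsGeometricallyOn.summable_iterate {T : V → V} (hT : ContractsGeometricallyOn T S)
    {x : V} (hx : x ∈ S) : Summable fun n : ℕ => T^[n] x := by
  obtain ⟨C, lam, -, hlam0, hlam1, hbound⟩ := hT
  exact .of_norm_bounded (((summable_geometric_of_lt_one hlam0 hlam1).mul_left C).mul_right ‖x‖)
    fun n => hbound n x hx

variable {𝕜 : Type*} [NormedField 𝕜] [NormedSpace 𝕜 V]

theorem ContractsGeometricallyOn.exists_eq_add_apply {T : V →L[𝕜] V}
    (hT : ContractsGeometricallyOn T S) {x : V} (hx : x ∈ S) : ∃ y, y = x + T y := by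
  have hsum : Summable fun n : ℕ => T^[n] x := hT.summable_iterate hx
  refine ⟨∑' n : ℕ, T^[n] x, ?_⟩
  calc ∑' n : ℕ, T^[n] x = x + ∑' n : ℕ, T (T^[n] x) := by
        simp only [hsum.tsum_eq_zero_add, iterate_zero_apply, iterate_succ_apply']
    _ = x + T (∑' n : ℕ, T^[n] x) := by rw [T.map_tsum hsum]

theorem exists_eq_add_apply_of_contractsGeometricallyOn {A B : V →L[𝕜] V}
    (hAB : RightInverse B A) (hA : ContractsGeometricallyOn A S)
    (hB : ContractsGeometricallyOn B U) {s u : V} (hs : s ∈ S) (hu : u ∈ U) :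
    ∃ y, y = s + u + A y := by
  obtain ⟨y, hy⟩ := hA.exists_eq_add_apply hs
  obtain ⟨z, hz⟩ := hB.exists_eq_add_apply hu
  refine ⟨y - B z, ?_⟩
  calc y - B z = s + A y - (z - u) := by rw [← hy, eq_sub_of_add_eq' hz.symm]
    _ = s + u + A (y - B z) := by rw [map_sub, hAB z]; abel

end GeometricContraction

section WeightedComposition

variable {𝕜 V E : Type*} [NontriviallyNormedField 𝕜] [NormedAddCommGroup V] [NormedSpace 𝕜 V]
  [TopologicalSpace E]

/-- The weighted composition operator `v ↦ T ∘ v ∘ φ` on bounded continuous functions, in terms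
of which the twisted cohomological equation is a fixed point equation. -/
noncomputable def weightedComp (T : V →L[𝕜] V) (φ : C(E, E)) : (E →ᵇ V) →L[𝕜] (E →ᵇ V) :=
  (T.compLeftContinuousBounded E).comp (compContinuousCLM V 𝕜 φ)

theorem weightedComp_apply (T : V →L[𝕜] V) (φ : C(E, E)) (v : E →ᵇ V) (e : E) :
    weightedComp T φ v e = T (v (φ e)) :=
  rfl

theorem weightedComp_iterate_apply (T : V →L[𝕜] V) (φ : C(E, E)) (n : ℕ) (v : E →ᵇ V) (e : E) :
    (weightedComp T φ)^[n] v e = T^[n] (v (φ^[n] e)) := by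
  induction n generalizing e with
  | zero => rfl
  | succ n ih => rw [iterate_succ_apply', weightedComp_apply, ih, ← iterate_succ_apply' T,
      ← iterate_succ_apply φ]

theorem contractsGeometricallyOn_weightedComp {T : V →L[𝕜] V} {S : Set V}
    (hT : ContractsGeometricallyOn T S) (φ : C(E, E)) :
    ContractsGeometricallyOn (weightedComp T φ) {v | ∀ e, v e ∈ S} := by
  obtain ⟨C, lam, hC, hlam0, hlam1, hbound⟩ := hT
  refine ⟨C, lam, hC, hlam0, hlam1, fun n v hv => (norm_le (by positivity)).2 fun e => ?_⟩
  calc ‖(weightedComp T φ)^[n] v e‖ = ‖T^[n] (v (φ^[n] e))‖ := by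
        rw [weightedComp_iterate_apply]
    _ ≤ C * lam ^ n * ‖v (φ^[n] e)‖ := hbound n _ (hv _)
    _ ≤ C * lam ^ n * ‖v‖ := by gcongr; exact v.norm_coe_le_norm _

theorem rightInverse_weightedComp {A B : V →L[𝕜] V} (hAB : RightInverse B A) (F : E ≃ₜ E) :
    RightInverse (weightedComp B (F : C(E, E))) (weightedComp A (F.symm : C(E, E))) := fun v => by
  ext e
  simp [weightedComp_apply, hAB (v e)]

theorem exists_twisted_cohomological_solution [CompleteSpace V] {A B : V →L[𝕜] V}
    (hAB : RightInverse B A) {S U : Submodule 𝕜 V} (hSU : S.IsTopCompl U)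
    (hA : ContractsGeometricallyOn A S) (hB : ContractsGeometricallyOn B U)
    (F : E ≃ₜ E) (r : E →ᵇ V) : ∃ w : E →ᵇ V, ∀ e, w (F e) = A (w e) + r e := by
  let P := S.projectionL U hSU
  let Q := U.projectionL S hSU.symm
  let rF := r.compContinuous (F.symm : C(E, E))
  obtain ⟨w, hw⟩ := exists_eq_add_apply_of_contractsGeometricallyOn
    (rightInverse_weightedComp hAB F) (contractsGeometricallyOn_weightedComp hA _)
    (contractsGeometricallyOn_weightedComp hB _)
    (s := P.compLeftContinuousBounded E rF) (u := Q.compLeftContinuousBounded E rF)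
    (fun _ => S.projectionL_apply_mem hSU _) (fun _ => U.projectionL_apply_mem hSU.symm _)
  refine ⟨w, fun e => ?_⟩
  calc w (F e) = P (r (F.symm (F e))) + Q (r (F.symm (F e))) + A (w (F.symm (F e))) :=
        DFunLike.congr_fun hw (F e)
    _ = A (w e) + r e := by
        rw [F.symm_apply_apply, Submodule.projectionL_add_projectionL_eq_self, add_comm]

end WeightedComposition

section TranslationAlong

variable {V Γ E : Type*} [TopologicalSpace V] [AddCommGroup V]
  [TopologicalSpace Γ] [AddMonoid Γ] [TopologicalSpace E] [AddAction Γ E] [ContinuousVAdd Γ E]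

/-- The map `e ↦ e + p (w e)` moving each point of `E` by the image in `Γ` of a `V`-valued
displacement `w`; the paper's `h` is of this form, with `p` the projection to the torus. -/
def translationAlong (p : V →ₜ+ Γ) (w : C(E, V)) : C(E, E) where
  toFun e := p (w e) +ᵥ e
  continuous_toFun := ((map_continuous p).comp w.continuous).vadd continuous_id

theorem translationAlong_apply (p : V →ₜ+ Γ) (w : C(E, V)) (e : E) :
    translationAlong p w e = p (w e) +ᵥ e :=
  rfl

theorem translationAlong_homotopic_id [Module ℝ V] [ContinuousSMul ℝ V] (p : V →ₜ+ Γ)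
    (w : C(E, V)) : (translationAlong p w).Homotopic (ContinuousMap.id E) :=
  .symm ⟨{
    toFun q := p ((q.1 : ℝ) • w q.2) +ᵥ q.2
    continuous_toFun := ((map_continuous p).comp (by fun_prop)).vadd continuous_snd
    map_zero_left := by simp
    map_one_left := by simp [translationAlong_apply] }⟩

theorem semiconj_translationAlong {p : V →ₜ+ Γ} {A : V → V} {F G : E → E} {r : E → V} {w : C(E, V)}
    (hG : ∀ x e, G (p x +ᵥ e) = p (A x) +ᵥ G e) (hr : ∀ e, G e = p (r e) +ᵥ F e)
    (hw : ∀ e, w (F e) = A (w e) + r e) : Semiconj (translationAlong p w) F G := fun e => by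
  simp only [translationAlong_apply, hw, map_add, add_vadd, hG, hr]

end TranslationAlong

section FiniteDimensional

theorem contractsGeometricallyOn_toContinuousLinearMap {𝕜 V : Type*} [NontriviallyNormedField 𝕜]
    [CompleteSpace 𝕜] [NormedAddCommGroup V] [NormedSpace 𝕜 V] [FiniteDimensional 𝕜 V]
    {T : V →ₗ[𝕜] V} {S : Set V} {C lam : ℝ} (hC : 0 ≤ C) (hlam0 : 0 ≤ lam) (hlam1 : lam < 1)
    (hbound : ∀ n : ℕ, ∀ x ∈ S, ‖(T ^ n) x‖ ≤ C * lam ^ n * ‖x‖) :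
    ContractsGeometricallyOn (LinearMap.toContinuousLinearMap T) S :=
  ⟨C, lam, hC, hlam0, hlam1, fun n x hx => by simpa [Module.End.pow_apply] using hbound n x hx⟩

theorem isUnit_det_map_intCast {n : Type*} [Fintype n] [DecidableEq n] {A : Matrix n n ℤ}
    (hA : IsUnit A.det) (R : Type*) [CommRing R] : IsUnit (A.map (Int.cast : ℤ → R)).det := by
  simpa [← Int.cast_det] using hA.map (Int.castRingHom R)

theorem rightInverse_mulVecLin_nonsing_inv {n R : Type*} [Fintype n] [DecidableEq n] [CommRing R]
    {M : Matrix n n R} (hM : IsUnit M.det) : RightInverse M⁻¹.mulVecLin M.mulVecLin := fun x => by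
  simp [Matrix.mul_nonsing_inv M hM]

end FiniteDimensional

/-- `torusProj` as a continuous homomorphism `ℝ^d → 𝕋^d`. -/
noncomputable def torusProjHom (d : ℕ) : (Fin d → ℝ) →ₜ+ (Fin d → AddCircle (1 : ℝ)) where
  toFun := torusProj d
  map_zero' := rfl
  map_add' _ _ := rfl
  continuous_toFun := continuous_pi fun i =>
    (AddCircle.continuous_mk' 1).comp (continuous_apply i)

theorem stmt9_general {V Γ E : Type*} [NormedAddCommGroup V] [NormedSpace ℝ V] [CompleteSpace V]
    [TopologicalSpace Γ] [AddMonoid Γ] [TopologicalSpace E] [AddAction Γ E] [ContinuousVAdd Γ E]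
    {A B : V →L[ℝ] V} (hAB : RightInverse B A) {S U : Submodule ℝ V} (hSU : S.IsTopCompl U)
    (hA : ContractsGeometricallyOn A S) (hB : ContractsGeometricallyOn B U)
    (p : V →ₜ+ Γ) (G : E → E) (hG : ∀ x e, G (p x +ᵥ e) = p (A x) +ᵥ G e)
    (F : E ≃ₜ E) (r : E →ᵇ V) (hr : ∀ e, G e = p (r e) +ᵥ F e) :
    ∃ (w : E →ᵇ V) (h : C(E, E)), (∀ e, h e = p (w e) +ᵥ e) ∧ Semiconj h F G ∧
      h.Homotopic (ContinuousMap.id E) := by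
  obtain ⟨w, hw⟩ := exists_twisted_cohomological_solution hAB hSU hA hB F r
  exact ⟨w, translationAlong p w.toContinuousMap, translationAlong_apply p w.toContinuousMap,
    semiconj_translationAlong hG hr hw, translationAlong_homotopic_id p w.toContinuousMap⟩

/-- Proposition 5.1: construction of the semi-conjugacy `h = id + w`, homotopic to
the identity, between a homeomorphism `F` and an `A`-map `G` on a compact space `E`
with a continuous `𝕋^d`-action, where `A` is a hyperbolic integer matrix with
determinant `±1` and the difference `G - F` lifts to a continuous `ℝ^d`-valued map. -/
theorem stmt9
    (d : ℕ) (hd : 1 ≤ d)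
    (A : Matrix (Fin d) (Fin d) ℤ) (hdet : A.det = 1 ∨ A.det = -1)
    (S U : Submodule ℝ (Fin d → ℝ)) (hSU : IsCompl S U)
    (hAS : S.map (A.map (Int.cast : ℤ → ℝ)).mulVecLin = S)
    (hAU : U.map (A.map (Int.cast : ℤ → ℝ)).mulVecLin = U)
    (C lam : ℝ) (hC : 0 < C) (hlam0 : 0 < lam) (hlam1 : lam < 1)
    (hstab : ∀ n : ℕ, ∀ s ∈ S,
      ‖((A.map (Int.cast : ℤ → ℝ)).mulVecLin ^ n) s‖ ≤ C * lam ^ n * ‖s‖)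
    (hunst : ∀ n : ℕ, ∀ u ∈ U,
      ‖(((A.map (Int.cast : ℤ → ℝ))⁻¹).mulVecLin ^ n) u‖ ≤ C * lam ^ n * ‖u‖)
    (LA : (Fin d → AddCircle (1 : ℝ)) → (Fin d → AddCircle (1 : ℝ)))
    (hLA : ∀ x : Fin d → ℝ,
      LA (torusProj d x) = torusProj d ((A.map (Int.cast : ℤ → ℝ)).mulVec x))
    {E : Type*} [TopologicalSpace E] [CompactSpace E]
    [AddAction (Fin d → AddCircle (1 : ℝ)) E]
    [ContinuousVAdd (Fin d → AddCircle (1 : ℝ)) E]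
    (G : E → E)
    (hG : ∀ (e : E) (τ : Fin d → AddCircle (1 : ℝ)), G (τ +ᵥ e) = LA τ +ᵥ G e)
    (F : E ≃ₜ E)
    (rt : E → (Fin d → ℝ)) (hrt : Continuous rt)
    (hr : ∀ e : E, G e = torusProj d (rt e) +ᵥ F e) :
    ∃ w : E → (Fin d → AddCircle (1 : ℝ)), Continuous w ∧
      ∃ h : C(E, E), (∀ e : E, h e = w e +ᵥ e) ∧ (∀ e : E, h (F e) = G (h e)) ∧
        h.Homotopic (ContinuousMap.id E) := by
  let M := A.map (Int.cast : ℤ → ℝ)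
  have hM : IsUnit M.det := isUnit_det_map_intCast (Int.isUnit_iff.2 hdet) ℝ
  have hstable := contractsGeometricallyOn_toContinuousLinearMap hC.le hlam0.le hlam1 hstab
  have hunstable := contractsGeometricallyOn_toContinuousLinearMap hC.le hlam0.le hlam1 hunst
  have hG_lift : ∀ x e, G (torusProj d x +ᵥ e) = torusProj d (M.mulVec x) +ᵥ G e := fun x e => by
    rw [hG, hLA]
  obtain ⟨w, h, hw⟩ := stmt9_general (rightInverse_mulVecLin_nonsing_inv hM)
    ⟨hSU, LinearMap.continuous_of_finiteDimensional _⟩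
    hstable hunstable (torusProjHom d) G hG_lift F (mkOfCompact ⟨rt, hrt⟩) hr
  exact ⟨fun e => torusProjHom d (w e), (map_continuous _).comp w.continuous, h, hw⟩
end
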